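/- arXiv:1612.00889 — 3 statements merged into one kernel-verified Lean document; each statement's English description precedes it below -/
import Mathlib

section
/- Let P be a finite set, Q a set, w : P → [0,∞) a weight function, and f : P × Q → ℝ a cost function with 0 ≤ f(p,q) ≤ 1 for all p ∈ P, q ∈ Q. Let s : P → (0,∞) satisfy s(p) ≥ w(p)·f(p,q) for every p ∈ P and q ∈ Q, and set t := Σ_{p∈P} s(p) (assume t > 0). Define w'(p) := s(p)/t and f'(p,q) := w(p)·f(p,q)/s(p). Let S ⊆ P, let u : S → [0,∞), and define u'(p) := u(p)·w(p)/w'(p) for p ∈ S. Let ε, ν > 0. Then for every q ∈ Q such that |Σ_{p∈P} w'(p)·f'(p,q) − Σ_{p∈S} u(p)·f'(p,q)|_{ν/t} ≤ ε, it holds that |Σ_{p∈P} w(p)·f(p,q) − Σ_{p∈S} u'(p)·f(p,q)|_ν ≤ ε. -/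
open Finset

/-- The ν-distance `|a − b|_ν := |a − b| / (a + b + ν)`. -/
noncomputable def nuDist (a b ν : ℝ) : ℝ := |a - b| / (a + b + ν)

theorem nuDist_mul_left {c : ℝ} (hc : 0 < c) (a b ν : ℝ) :
    nuDist (c * a) (c * b) (c * ν) = nuDist a b ν := by
  simp only [nuDist, ← mul_sub, ← mul_add, abs_mul, abs_of_pos hc,
    mul_div_mul_left _ _ hc.ne']

theorem sum_reweighted_eq_mul_sum_rescaled {α K : Type*} [Semifield K] (A : Finset α)
    (u w s f : α → K) (c : K) :
    ∑ p ∈ A, u p * w p / (s p / c) * f p = c * ∑ p ∈ A, u p * (w p * f p / s p) := by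
  rw [mul_sum]
  exact sum_congr rfl fun p _ => by rw [div_div_eq_mul_div]; ring

theorem improved_approximation_general {α : Type*} {P S : Finset α} {s : α → ℝ} {c : ℝ}
    (hs : ∀ p, p ∈ P ∨ p ∈ S → s p ≠ 0) (hc : 0 < c) (w f u : α → ℝ) (ν : ℝ) :
    nuDist (∑ p ∈ P, w p * f p) (∑ p ∈ S, u p * w p / (s p / c) * f p) ν =
      nuDist (∑ p ∈ P, s p / c * (w p * f p / s p)) (∑ p ∈ S, u p * (w p * f p / s p))
        (ν / c) := by
  -- Reweighting `u ↦ u * w / (s / c)` sends the rescaled weight `s / c` itself back to `w`.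
  have full_cost : ∑ p ∈ P, w p * f p = c * ∑ p ∈ P, s p / c * (w p * f p / s p) := by
    rw [← sum_reweighted_eq_mul_sum_rescaled]
    refine sum_congr rfl fun p hp => ?_
    rw [mul_div_cancel_left₀ _ (div_ne_zero (hs p (.inl hp)) hc.ne')]
  rw [full_cost, sum_reweighted_eq_mul_sum_rescaled, ← nuDist_mul_left hc _ _ (ν / c),
    mul_div_cancel₀ ν hc.ne']

/-- Theorem (improved (ε,ν)-approximation): given a query space `(P, w, Q, f)` with
`0 ≤ f ≤ 1`, importances `s` with `s p ≥ w p · f p q`, total importance `t`,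
rescaled weights `w' p = s p / t` and costs `f' p q = w p · f p q / s p`,
and a weighted subset `(S, u)` with `u' p = u p · w p / w' p`:
for every query `q` for which `(S,u)` is an `(ε, ν/t)`-approximation of the rescaled
query space, `(S, u')` satisfies `|f̄(P,w,q) − f̄(S,u',q)|_ν ≤ ε`. -/
theorem improved_approximation {α Q : Type*} (P : Finset α) (S : Finset α)
    (hSP : S ⊆ P)
    (w : α → ℝ) (f : α → Q → ℝ) (s : α → ℝ) (u : α → ℝ)
    (t : ℝ) (w' : α → ℝ) (f' : α → Q → ℝ) (u' : α → ℝ) (ε ν : ℝ)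
    (hw : ∀ p ∈ P, 0 ≤ w p)
    (hf0 : ∀ p ∈ P, ∀ q : Q, 0 ≤ f p q)
    (hf1 : ∀ p ∈ P, ∀ q : Q, f p q ≤ 1)
    (hs : ∀ p ∈ P, 0 < s p)
    (hsf : ∀ p ∈ P, ∀ q : Q, w p * f p q ≤ s p)
    (ht : t = ∑ p ∈ P, s p) (htpos : 0 < t)
    (hw' : ∀ p, w' p = s p / t)
    (hf' : ∀ p q, f' p q = w p * f p q / s p)
    (hu : ∀ p ∈ S, 0 ≤ u p)
    (hu' : ∀ p, u' p = u p * w p / w' p)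
    (hε : 0 < ε) (hν : 0 < ν) :
    ∀ q : Q,
      nuDist (∑ p ∈ P, w' p * f' p q) (∑ p ∈ S, u p * f' p q) (ν / t) ≤ ε →
      nuDist (∑ p ∈ P, w p * f p q) (∑ p ∈ S, u' p * f p q) ν ≤ ε := by
  intro q
  simp only [hw', hf', hu', imp_self, improved_approximation_general
    (fun p hp => (hs p (hp.elim id (@hSP p))).ne') htpos w (f · q) u ν]
end

section
/- Let P be a finite set, Q a set, w : P → [0,∞) a weight function, and g : P × Q → [0,∞) a nonnegative cost function such that ḡ(P,w,q) := Σ_{p∈P} w(p)·g(p,q) > 0 for every q ∈ Q. Define f(p,q) := g(p,q) / ḡ(P,w,q). Let s : P → (0,∞) satisfy s(p) ≥ w(p)·f(p,q) for every p ∈ P and q ∈ Q, set t := Σ_{p∈P} s(p), w'(p) := s(p)/t, and f'(p,q) := w(p)·f(p,q)/s(p). Let ε ∈ (0,1], let S ⊆ P with u : S → [0,∞), and define u'(p) := u(p)·w(p)/w'(p) for p ∈ S. Then for every q ∈ Q such that |Σ_{p∈P} w'(p)·f'(p,q) − Σ_{p∈S} u(p)·f'(p,q)|_{1/(4t)} ≤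 ε/4, it holds that |ḡ(P,w,q) − Σ_{p∈S} u'(p)·g(p,q)| ≤ ε·ḡ(P,w,q). -/
open Finset

theorem one_sub_mul_abs_sub_le_of_nuDist_le {a b ν δ : ℝ} (hpos : 0 < a + b + ν)
    (h : nuDist a b ν ≤ δ) : (1 - δ) * |a - b| ≤ δ * (2 * a + ν) := by
  have hδ : 0 ≤ δ := (div_nonneg (abs_nonneg _) hpos.le).trans h
  have hb : b ≤ a + |a - b| := by linarith [neg_abs_le (a - b)]
  have habs : |a - b| ≤ δ * (2 * a + ν + |a - b|) :=
    calc |a - b| ≤ δ * (a + b + ν) := (div_le_iff₀ hpos).1 h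
      _ ≤ δ * (2 * a + ν + |a - b|) := mul_le_mul_of_nonneg_left (by linarith) hδ
  linarith

section Rescaling

variable {α : Type*} (P S : Finset α) (w g s u : α → ℝ) {t : ℝ}

theorem sum_mul_rescaledCost (ht : t ≠ 0) (C : ℝ) :
    ∑ p ∈ S, u p * (w p * (g p / C) / s p) =
      (t * C)⁻¹ * ∑ p ∈ S, u p * w p / (s p / t) * g p := by
  rw [mul_sum]
  refine sum_congr rfl fun p _ => ?_
  field_simp

theorem sum_rescaledWeight_mul_rescaledCost (ht : t ≠ 0) (hs : ∀ p ∈ P, s p ≠ 0) (C : ℝ) :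
    ∑ p ∈ P, s p / t * (w p * (g p / C) / s p) = (t * C)⁻¹ * ∑ p ∈ P, w p * g p := by
  rw [sum_mul_rescaledCost P w g s (fun p => s p / t) ht]
  congr 1
  refine sum_congr rfl fun p hp => ?_
  rw [mul_div_cancel_left₀ _ (div_ne_zero (hs p hp) ht)]

theorem nuDist_rescaled (ht : 0 < t) (hs : ∀ p ∈ P, s p ≠ 0) {C : ℝ} (hC : 0 < C) (c : ℝ) :
    nuDist (∑ p ∈ P, s p / t * (w p * (g p / C) / s p))
        (∑ p ∈ S, u p * (w p * (g p / C) / s p)) (c / t) =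
      nuDist (∑ p ∈ P, w p * g p) (∑ p ∈ S, u p * w p / (s p / t) * g p) (c * C) := by
  have hν : c / t = (t * C)⁻¹ * (c * C) := by field_simp
  rw [sum_rescaledWeight_mul_rescaledCost P w g s ht.ne' hs, sum_mul_rescaledCost S w g s u ht.ne',
    hν, nuDist_mul_left (by positivity)]

end Rescaling

theorem eps_coreset_from_approximation_general {α Q : Type*} (P S : Finset α)
    (w : α → ℝ) (g f : α → Q → ℝ) (s u : α → ℝ) (t : ℝ) (w' : α → ℝ) (f' : α → Q → ℝ)
    (u' : α → ℝ) (c δ ε : ℝ) (q : Q)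
    (hw : ∀ p ∈ S, 0 ≤ w p)
    (hg : ∀ p ∈ S, 0 ≤ g p q)
    (hgbar : 0 < ∑ p ∈ P, w p * g p q)
    (hfdef : ∀ p q, f p q = g p q / (∑ p' ∈ P, w p' * g p' q))
    (hsP : ∀ p ∈ P, 0 < s p)
    (hsS : ∀ p ∈ S, 0 < s p)
    (ht : t = ∑ p ∈ P, s p)
    (hw' : ∀ p, w' p = s p / t)
    (hf' : ∀ p q, f' p q = w p * f p q / s p)
    (hu : ∀ p ∈ S, 0 ≤ u p)
    (hu' : ∀ p, u' p = u p * w p / w' p)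
    (hc : 0 ≤ c) (hδ : δ < 1) (hδε : δ * (2 + c) ≤ ε * (1 - δ))
    (h : nuDist (∑ p ∈ P, w' p * f' p q) (∑ p ∈ S, u p * f' p q) (c / t) ≤ δ) :
    |(∑ p ∈ P, w p * g p q) - ∑ p ∈ S, u' p * g p q| ≤ ε * ∑ p ∈ P, w p * g p q := by
  have ht_pos : 0 < t := ht ▸ sum_pos hsP (nonempty_of_sum_ne_zero hgbar.ne')
  simp only [hf', hfdef, hw'] at h
  rw [nuDist_rescaled P S w (g · q) s u ht_pos (fun p hp => (hsP p hp).ne') hgbar] at h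
  simp only [hu', hw']
  set A := ∑ p ∈ P, w p * g p q
  set B := ∑ p ∈ S, u p * w p / (s p / t) * g p q
  have hB : 0 ≤ B := sum_nonneg fun p hp =>
    mul_nonneg (div_nonneg (mul_nonneg (hu p hp) (hw p hp)) (div_pos (hsS p hp) ht_pos).le)
      (hg p hp)
  refine le_of_mul_le_mul_left ?_ (sub_pos.2 hδ)
  calc (1 - δ) * |A - B| ≤ δ * (2 * A + c * A) :=
        one_sub_mul_abs_sub_le_of_nuDist_le (by positivity) h
    _ = δ * (2 + c) * A := by ring
    _ ≤ ε * (1 - δ) * A := mul_le_mul_of_nonneg_right hδε hgbar.le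
    _ = (1 - δ) * (ε * A) := by ring

/-- Corollary (ε-coreset from (ε/4, 1/(4t))-approximation): given a query space
`(P, w, Q, g)` with nonnegative `g` and positive total cost `ḡ(P,w,q)` for each query,
the normalized cost `f p q = g p q / ḡ(P,w,q)`, importances `s`, total importance `t`,
rescaled weights `w' p = s p / t`, rescaled costs `f' p q = w p · f p q / s p`, and
coreset weights `u' p = u p · w p / w' p`:
for every query `q` for which `(S,u)` is an `(ε/4, 1/(4t))`-approximation of the rescaled
query space, the weighted set `(S, u')` satisfies
`|ḡ(P,w,q) − ḡ(S,u',q)| ≤ ε · ḡ(P,w,q)`. -/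
theorem eps_coreset_from_approximation {α Q : Type*} (P : Finset α) (S : Finset α)
    (hSP : S ⊆ P)
    (w : α → ℝ) (g : α → Q → ℝ) (f : α → Q → ℝ) (s : α → ℝ) (u : α → ℝ)
    (t : ℝ) (w' : α → ℝ) (f' : α → Q → ℝ) (u' : α → ℝ) (ε : ℝ)
    (hw : ∀ p ∈ P, 0 ≤ w p)
    (hg : ∀ p ∈ P, ∀ q : Q, 0 ≤ g p q)
    (hgbar : ∀ q : Q, 0 < ∑ p ∈ P, w p * g p q)
    (hfdef : ∀ p q, f p q = g p q / (∑ p' ∈ P, w p' * g p' q))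
    (hs : ∀ p ∈ P, 0 < s p)
    (hsf : ∀ p ∈ P, ∀ q : Q, w p * f p q ≤ s p)
    (ht : t = ∑ p ∈ P, s p)
    (hw' : ∀ p, w' p = s p / t)
    (hf' : ∀ p q, f' p q = w p * f p q / s p)
    (hu : ∀ p ∈ S, 0 ≤ u p)
    (hu' : ∀ p, u' p = u p * w p / w' p)
    (hε : 0 < ε) (hε1 : ε ≤ 1) :
    ∀ q : Q,
      nuDist (∑ p ∈ P, w' p * f' p q) (∑ p ∈ S, u p * f' p q) (1 / (4 * t)) ≤ ε / 4 →
      |(∑ p ∈ P, w p * g p q) - ∑ p ∈ S, u' p * g p q| ≤ ε * ∑ p ∈ P, w p * g p q := by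
  intro q h
  exact eps_coreset_from_approximation_general P S w g f s u t w' f' u' (1 / 4) (ε / 4) ε q
    (fun p hp => hw p (hSP hp)) (fun p hp => hg p (hSP hp) q) (hgbar q) hfdef hs
    (fun p hp => hs p (hSP hp)) ht hw' hf' hu hu' (by norm_num) (by linarith) (by nlinarith)
    (by rwa [div_div])
end

section
/- Let ρ ≥ 1 and let (X, D) be a ρ-metric space. Let P ⊆ X be a finite set with weight function w : P → [0,∞), and let p ↦ p' be a map from P into a finite set B ⊆ X. Let C ⊆ X be a finite nonempty set, let α ≥ 0, and assume Σ_{q∈P} w(q)·D(q, q') ≤ α·Σ_{q∈P} w(q)·D(q, C). For b ∈ B let P_b := {q ∈ P : q' = b}. Then for every p ∈ P with p ∈ P_b, D(p', C) · Σ_{q∈P_b} w(q) ≤ ρ·(α + 1)·Σ_{q∈P} w(q)·D(q, C). -/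
open Finset

/-- Distance from a point to a finite set of centers: `D(x,C) = min_{c ∈ C} D(x,c)`. -/
noncomputable def distToSet {X : Type*} (D : X → X → ℝ) (x : X) (C : Finset X) : ℝ :=
  sInf ((fun c => D x c) '' C)

/-! The points of a cluster share their center, so the left-hand side is the part of
`∑ q ∈ P, w q * D(q', C)` contributed by one cluster. Going from `q'` to `C` through `q` costs at
most `ρ * (D(q', q) + D(q, C))`; summed with weights, the first term is controlled by `α` times the
clustering cost and the second is the clustering cost itself. -/

section DistToSet

variable {X : Type*} {D : X → X → ℝ} {x : X} {C : Finset X}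

lemma distToSet_le {c : X} (hc : c ∈ C) : distToSet D x C ≤ D x c :=
  csInf_le (C.finite_toSet.image _).bddBelow (Set.mem_image_of_mem _ hc)

lemma exists_mem_distToSet_eq (D : X → X → ℝ) (x : X) (hC : C.Nonempty) :
    ∃ c ∈ C, D x c = distToSet D x C :=
  (hC.to_set.image (D x)).csInf_mem (C.finite_toSet.image _)

lemma distToSet_nonneg (hD : ∀ c ∈ C, 0 ≤ D x c) : 0 ≤ distToSet D x C :=
  Real.sInf_nonneg (Set.forall_mem_image.2 hD)

variable {ρ : ℝ}

lemma distToSet_le_mul_add (htri : ∀ x y z, D x z ≤ ρ * (D x y + D y z)) (hC : C.Nonempty)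
    (x y : X) : distToSet D x C ≤ ρ * (D x y + distToSet D y C) := by
  obtain ⟨c, hc, hyc⟩ := exists_mem_distToSet_eq D y hC
  calc distToSet D x C ≤ D x c := distToSet_le hc
    _ ≤ ρ * (D x y + D y c) := htri x y c
    _ = ρ * (D x y + distToSet D y C) := by rw [hyc]

lemma sum_mul_distToSet_le_mul_add {ι : Type*} {s : Finset ι} {w : ι → ℝ}
    (htri : ∀ x y z, D x z ≤ ρ * (D x y + D y z)) (hC : C.Nonempty) (hw : ∀ i ∈ s, 0 ≤ w i)
    (x y : ι → X) :
    ∑ i ∈ s, w i * distToSet D (x i) C ≤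
      ρ * (∑ i ∈ s, w i * D (x i) (y i) + ∑ i ∈ s, w i * distToSet D (y i) C) :=
  calc ∑ i ∈ s, w i * distToSet D (x i) C
      ≤ ∑ i ∈ s, w i * (ρ * (D (x i) (y i) + distToSet D (y i) C)) :=
        sum_le_sum fun i hi =>
          mul_le_mul_of_nonneg_left (distToSet_le_mul_add htri hC (x i) (y i)) (hw i hi)
    _ = ρ * (∑ i ∈ s, w i * D (x i) (y i) + ∑ i ∈ s, w i * distToSet D (y i) C) := by
        simp only [← sum_add_distrib, mul_sum, mul_add, mul_left_comm]

end DistToSet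

lemma mul_sum_fiber_le_sum_mul_comp {ι κ R : Type*} [DecidableEq κ] [CommSemiring R]
    [PartialOrder R] [IsOrderedAddMonoid R] {s : Finset ι} {w : ι → R} {π : ι → κ} {f : κ → R}
    (h : ∀ i ∈ s, 0 ≤ w i * f (π i)) (b : κ) :
    f b * ∑ i ∈ s with π i = b, w i ≤ ∑ i ∈ s, w i * f (π i) :=
  calc f b * ∑ i ∈ s with π i = b, w i
      = ∑ i ∈ s with π i = b, w i * f (π i) := by
        rw [mul_comm, sum_mul]
        exact sum_congr rfl fun i hi => by rw [(mem_filter.mp hi).2]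
    _ ≤ ∑ i ∈ s, w i * f (π i) :=
        sum_le_sum_of_subset_of_nonneg (filter_subset _ _) fun i hi _ => h i hi

/-- Key intermediate inequality in the sensitivity bound: in a ρ-metric space, if the
weighted connection cost of `p ↦ p'` is at most `α` times the weighted clustering cost to
`C`, then for every `p ∈ P` (with cluster `P_b`, `b = p'`),
`D(p',C) · ∑_{q ∈ P_b} w(q) ≤ ρ·(α+1)·∑_{q ∈ P} w(q)·D(q,C)`. -/
theorem cluster_center_cost_bound {X : Type*} [DecidableEq X] (D : X → X → ℝ)
    (ρ : ℝ) (hρ1 : 1 ≤ ρ)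
    (hsymm : ∀ x y, D x y = D y x) (hnonneg : ∀ x y, 0 ≤ D x y)
    (htri : ∀ x y z, D x z ≤ ρ * (D x y + D y z))
    (P : Finset X) (w : X → ℝ) (hw : ∀ p ∈ P, 0 ≤ w p)
    (B : Finset X) (π : X → X) (hπB : ∀ p ∈ P, π p ∈ B)
    (C : Finset X) (hC : C.Nonempty)
    (α : ℝ) (hα : 0 ≤ α)
    (hcost : ∑ q ∈ P, w q * D q (π q) ≤ α * ∑ q ∈ P, w q * distToSet D q C) :
    ∀ p ∈ P,
      distToSet D (π p) C * (∑ q ∈ P.filter fun q => π q = π p, w q) ≤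
        ρ * (α + 1) * ∑ q ∈ P, w q * distToSet D q C := by
  intro p _
  have hρ : 0 ≤ ρ := zero_le_one.trans hρ1
  have hcost' : ∑ q ∈ P, w q * D (π q) q ≤ α * ∑ q ∈ P, w q * distToSet D q C := by
    simpa only [hsymm (π _)] using hcost
  calc distToSet D (π p) C * (∑ q ∈ P.filter fun q => π q = π p, w q)
      ≤ ∑ q ∈ P, w q * distToSet D (π q) C :=
        mul_sum_fiber_le_sum_mul_comp (f := fun b => distToSet D b C)
          (fun q hq => mul_nonneg (hw q hq) (distToSet_nonneg fun c _ => hnonneg (π q) c)) (π p)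
    _ ≤ ρ * (∑ q ∈ P, w q * D (π q) q + ∑ q ∈ P, w q * distToSet D q C) :=
        sum_mul_distToSet_le_mul_add htri hC hw π id
    _ ≤ ρ * (α * ∑ q ∈ P, w q * distToSet D q C + ∑ q ∈ P, w q * distToSet D q C) :=
        mul_le_mul_of_nonneg_left (by gcongr) hρ
    _ = ρ * (α + 1) * ∑ q ∈ P, w q * distToSet D q C := by ring
end
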